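/- arXiv:1103.4068 — 3 statements merged into one kernel-verified Lean document; each statement's English description precedes it below -/
import Mathlib

section
/- For every positive integer n, the sum over all binary trees T with n vertices of 1/(∏_{h ∈ H(T)} (2h+1)·2^{2h-1}) equals 1/(2n+1)!, where H(T) is the multiset of hook lengths of T. -/
/-!
Write `a n` for the sum of the weights `1 / ∏_{h ∈ H(T)} (2h+1) 2^(2h-1)` over the trees with `n`
vertices. Removing the root of a nonempty tree leaves an ordered pair of trees, so
`a (n+1) = (∑_{i+j=n} a i * a j) / ((2n+3) 2^(2n+1))` with `a 0 = 1` (`weightSum_succ`).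
The sequence `1 / (2n+1)!` satisfies the same recurrence, because after clearing factorials this
says that the odd-index binomial coefficients of `2n+2` sum to `2^(2n+1)`
(`sum_choose_odd`, `sum_inv_factorial_odd`). Strong induction finishes the proof.
-/

/-- A binary tree: every vertex has an ordered pair of (possibly empty) subtrees.
`leaf` denotes the empty tree. -/
inductive BinTree : Type
  | leaf : BinTree
  | node : BinTree → BinTree → BinTree

namespace BinTree

/-- The number of vertices of a binary tree. -/
def count : BinTree → ℕ
  | leaf => 0
  | node l r => count l + count r + 1

/-- The multiset of hook lengths of a binary tree: the hook length of a vertex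
is the number of vertices of the subtree rooted at that vertex. -/
def hooks : BinTree → Multiset ℕ
  | leaf => 0
  | node l r => (count l + count r + 1) ::ₘ (hooks l + hooks r)

end BinTree

namespace BinTree

/-- The contribution `1 / ∏_{h ∈ H(T)} (2h+1) 2^(2h-1)` of a tree `T` to the sum. -/
def weight (T : BinTree) : ℚ :=
  (1 : ℚ) / ((hooks T).map fun h : ℕ => ((2 * h + 1 : ℕ) : ℚ) * (2 : ℚ) ^ (2 * h - 1)).prod

lemma weight_leaf : weight leaf = 1 := by
  simp [weight, hooks]

lemma weight_node (l r : BinTree) :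
    weight (node l r) = weight l * weight r /
      ((2 * (l.count + r.count) + 3 : ℕ) * (2 : ℚ) ^ (2 * (l.count + r.count) + 1)) := by
  have h1 : 2 * (l.count + r.count + 1) + 1 = 2 * (l.count + r.count) + 3 := by ring
  have h2 : 2 * (l.count + r.count + 1) - 1 = 2 * (l.count + r.count) + 1 := by omega
  simp only [weight, hooks, Multiset.map_cons, Multiset.prod_cons, Multiset.map_add,
    Multiset.prod_add, h1, h2, mul_inv, div_eq_mul_inv]
  ring

lemma finite_count_le (n : ℕ) : {T : BinTree | T.count ≤ n}.Finite := by
  induction n with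
  | zero =>
    refine (Set.finite_singleton leaf).subset ?_
    rintro (_ | ⟨l, r⟩) h
    · rfl
    · simp [count] at h
  | succ n ih =>
    refine (((ih.prod ih).image fun p => node p.1 p.2).union
      (Set.finite_singleton leaf)).subset ?_
    rintro (_ | ⟨l, r⟩) h
    · exact Or.inr rfl
    · simp only [Set.mem_ofPred_eq, count] at h
      exact Or.inl ⟨(l, r), ⟨by simp; omega, by simp; omega⟩, rfl⟩

lemma finite_count_eq (n : ℕ) : {T : BinTree | T.count = n}.Finite :=
  (finite_count_le n).subset fun _ h => le_of_eq h

/-- The set `B_n` of binary trees with `n` vertices, as a finset. -/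
noncomputable def trees (n : ℕ) : Finset BinTree := (finite_count_eq n).toFinset

lemma mem_trees {n : ℕ} {T : BinTree} : T ∈ trees n ↔ T.count = n := by
  simp [trees]

/-- The total weight of the trees with `n` vertices. -/
noncomputable def weightSum (n : ℕ) : ℚ := ∑ T ∈ trees n, weight T

lemma weightSum_zero : weightSum 0 = 1 := by
  have h : trees 0 = {leaf} := by
    ext T
    rw [mem_trees, Finset.mem_singleton]
    cases T <;> simp [count]
  rw [weightSum, h, Finset.sum_singleton, weight_leaf]

/-- Decomposition at the root. -/
lemma weightSum_succ (n : ℕ) :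
    weightSum (n + 1) = (∑ p ∈ Finset.HasAntidiagonal.antidiagonal n, weightSum p.1 * weightSum p.2) /
      ((2 * n + 3 : ℕ) * (2 : ℚ) ^ (2 * n + 1)) := by
  simp only [weightSum, Finset.sum_mul_sum, ← Finset.sum_product']
  rw [Finset.sum_sigma', Finset.sum_div]
  symm
  refine Finset.sum_bij (fun x _ => node x.2.1 x.2.2) ?_ ?_ ?_ ?_
  · rintro ⟨⟨i, j⟩, l, r⟩ h
    simp only [Finset.mem_sigma, Finset.HasAntidiagonal.mem_antidiagonal, Finset.mem_product, mem_trees] at h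
    simp only [mem_trees, count]
    omega
  · rintro ⟨⟨i, j⟩, l, r⟩ h ⟨⟨i', j'⟩, l', r'⟩ h' e
    simp only [Finset.mem_sigma, Finset.HasAntidiagonal.mem_antidiagonal, Finset.mem_product, mem_trees] at h h'
    obtain ⟨-, rfl, rfl⟩ := h
    obtain ⟨-, rfl, rfl⟩ := h'
    simp only [node.injEq] at e
    obtain ⟨rfl, rfl⟩ := e
    rfl
  · rintro (_ | ⟨l, r⟩) h
    · simp [mem_trees, count] at h
    · rw [mem_trees, count] at h
      refine ⟨⟨(l.count, r.count), (l, r)⟩, ?_, rfl⟩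
      simp only [Finset.mem_sigma, Finset.HasAntidiagonal.mem_antidiagonal, Finset.mem_product, mem_trees,
        and_self, and_true]
      omega
  · rintro ⟨⟨i, j⟩, l, r⟩ h
    simp only [Finset.mem_sigma, Finset.HasAntidiagonal.mem_antidiagonal, Finset.mem_product, mem_trees] at h
    obtain ⟨rfl, rfl, rfl⟩ := h
    exact (weight_node l r).symm

end BinTree

/-- Pascal's rule groups the full row `2n+1`, whose sum is `2^(2n+1)`, into consecutive pairs. -/
lemma sum_choose_odd (n : ℕ) :
    ∑ i ∈ Finset.range (n + 1), (2 * n + 2).choose (2 * i + 1) = 2 ^ (2 * n + 1) := by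
  have pairs (f : ℕ → ℕ) (m : ℕ) :
      ∑ i ∈ Finset.range m, (f (2 * i) + f (2 * i + 1)) = ∑ k ∈ Finset.range (2 * m), f k := by
    induction m with
    | zero => simp
    | succ m ih =>
      rw [Finset.sum_range_succ, ih, mul_add, mul_one, Finset.sum_range_succ,
        Finset.sum_range_succ, add_assoc]
  rw [← Nat.sum_range_choose (2 * n + 1), show 2 * n + 1 + 1 = 2 * (n + 1) by ring, ← pairs]
  exact Finset.sum_congr rfl fun i _ => Nat.choose_succ_succ (2 * n + 1) (2 * i)

lemma sum_inv_factorial_odd (n : ℕ) :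
    ∑ p ∈ Finset.HasAntidiagonal.antidiagonal n,
      (1 / (2 * p.1 + 1).factorial : ℚ) * (1 / (2 * p.2 + 1).factorial) =
      2 ^ (2 * n + 1) / (2 * n + 2).factorial := by
  have h := congrArg (Nat.cast : ℕ → ℚ) (sum_choose_odd n)
  push_cast at h
  rw [← h, Finset.Nat.sum_antidiagonal_eq_sum_range_succ_mk, Finset.sum_div]
  refine Finset.sum_congr rfl fun i hi => ?_
  have hi : i ≤ n := by simpa [Nat.lt_succ_iff] using hi
  rw [Nat.cast_choose ℚ (show 2 * i + 1 ≤ 2 * n + 2 by omega),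
    show 2 * n + 2 - (2 * i + 1) = 2 * (n - i) + 1 by omega]
  have h0 : ((2 * n + 2).factorial : ℚ) ≠ 0 := by positivity
  field_simp

lemma BinTree.weightSum_eq (n : ℕ) : weightSum n = 1 / (2 * n + 1).factorial := by
  induction n using Nat.strong_induction_on with
  | _ n ih =>
    cases n with
    | zero => simp [weightSum_zero]
    | succ n =>
      have hsum : ∑ p ∈ Finset.HasAntidiagonal.antidiagonal n, weightSum p.1 * weightSum p.2 =
          2 ^ (2 * n + 1) / (2 * n + 2).factorial := by
        rw [← sum_inv_factorial_odd]
        refine Finset.sum_congr rfl fun p hp => ?_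
        have hp := Finset.HasAntidiagonal.mem_antidiagonal.1 hp
        rw [ih p.1 (by omega), ih p.2 (by omega)]
      rw [weightSum_succ, hsum, show 2 * (n + 1) + 1 = (2 * n + 2) + 1 by ring,
        Nat.factorial_succ (2 * n + 2)]
      push_cast
      field_simp
      ring

/-- Han's second hook length formula: for every positive integer `n`,
`∑_{T ∈ B_n} 1 / ∏_{h ∈ H(T)} ((2h+1) · 2^(2h-1)) = 1 / (2n+1)!`. -/
theorem han_second_formula (n : ℕ) (hn : 0 < n) :
    ∑ᶠ T ∈ {T : BinTree | T.count = n},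
      (1 : ℚ) / ((BinTree.hooks T).map fun h : ℕ => ((2 * h + 1 : ℕ) : ℚ) * (2 : ℚ) ^ (2 * h - 1)).prod
      = 1 / (2 * n + 1).factorial := by
  rw [← BinTree.weightSum_eq]
  exact finsum_mem_eq_finite_toFinset_sum _ (BinTree.finite_count_eq n)
end

section
/- For all positive integers n and k, the sum over all k-ary trees T with n vertices of n!·k^{1+2+⋯+n}/(∏_{h ∈ H(T)} h·k^{h}) equals k^{1+2+⋯+(n-1)}, where H(T) is the multiset of hook lengths of T. -/
/-!
Write `w T = ∏ 1 / (h k^h)` over the hook lengths of `T`, and `S n` for the sum of `w` over the trees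
with `n` vertices.  A tree with `n + 1` vertices is a root together with `k` subtrees with `n`
vertices in total, so
`(n + 1) k^(n + 1) S (n + 1) = ∑_{m₁ + ⋯ + m_k = n} ∏ S mᵢ`.
By strong induction `S m = 1 / (m! k^m)` (`KTree.sum_weight`): the right-hand side then equals
`k^(-n) ∑ ∏ 1 / mᵢ! = k^(-n) · k^n / n!` by the multinomial theorem for `(1 + ⋯ + 1)^n`
(`KTree.sum_prod_inv_factorial`).  The theorem is this value of `S n` times `n! k^(1 + ⋯ + n)`.
-/

/-- A `k`-ary tree: every vertex has exactly `k` subtrees in linear order,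
each possibly empty.  `nil` denotes the empty tree. -/
inductive KTree (k : ℕ) : Type
  | nil : KTree k
  | node : (Fin k → KTree k) → KTree k

namespace KTree

variable {k : ℕ}

/-- The number of vertices of a `k`-ary tree. -/
def count : KTree k → ℕ
  | nil => 0
  | node c => 1 + ∑ i, count (c i)

/-- The multiset of hook lengths of a `k`-ary tree: the hook length of a vertex
is the number of vertices of the subtree rooted at that vertex. -/
def hooks : KTree k → Multiset ℕ
  | nil => 0
  | node c => count (node c) ::ₘ ∑ i, hooks (c i)

end KTree

namespace KTree

variable {k : ℕ}

theorem finite_count_eq (n : ℕ) : {T : KTree k | T.count = n}.Finite := by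
  induction n using Nat.strong_induction_on with
  | _ n ih =>
    have hlt : {T : KTree k | T.count < n}.Finite := by
      refine ((Set.finite_Iio n).biUnion fun m hm => ih m hm).subset ?_
      intro T hT
      simpa using hT
    refine (((Set.Finite.pi' fun _ : Fin k => hlt).image node).insert nil).subset ?_
    rintro (_ | c) hT
    · exact Set.mem_insert _ _
    · refine Set.mem_insert_of_mem _ ⟨c, fun i => ?_, rfl⟩
      have hi : (c i).count ≤ ∑ j, (c j).count :=
        Finset.single_le_sum (f := fun j => (c j).count) (fun _ _ => Nat.zero_le _)
          (Finset.mem_univ i)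
      simp only [Set.mem_ofPred_eq, count] at hT ⊢
      omega

/-- The `k`-ary trees with `n` vertices. -/
noncomputable def ofCount (k n : ℕ) : Finset (KTree k) :=
  (finite_count_eq n).toFinset

theorem mem_ofCount {n : ℕ} {T : KTree k} : T ∈ ofCount k n ↔ T.count = n := by
  simp [ofCount]

/-- The product of `h k^h` over the hook lengths `h` of a tree. -/
def hookProd (T : KTree k) : ℚ :=
  ((hooks T).map fun h : ℕ => (h : ℚ) * (k : ℚ) ^ h).prod

theorem hookProd_node (c : Fin k → KTree k) :
    hookProd (node c) =
      ((node c).count : ℚ) * (k : ℚ) ^ (node c).count * ∏ i, hookProd (c i) := by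
  rw [hookProd, hooks, Multiset.map_cons, Multiset.prod_cons]
  congr 1
  rw [← Multiset.coe_mapAddMonoidHom, map_sum, Multiset.prod_sum]
  rfl

/-- Decomposing at the root: the trees with `n + 1` vertices, sorted by the sizes of the
subtrees of the root. -/
theorem sum_ofCount_succ (n : ℕ) (f : KTree k → ℚ) :
    ∑ T ∈ ofCount k (n + 1), f T =
      ∑ m ∈ Finset.piAntidiag (Finset.univ : Finset (Fin k)) n,
        ∑ c ∈ Fintype.piFinset fun i => ofCount k (m i), f (node c) := by
  rw [Finset.sum_sigma']
  symm
  refine Finset.sum_bij (fun x _ => node x.2) ?_ ?_ ?_ ?_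
  · rintro ⟨m, c⟩ h
    simp only [Finset.mem_sigma, Finset.mem_piAntidiag, Fintype.mem_piFinset, mem_ofCount] at h
    simp only [mem_ofCount, count, h.2, h.1.1]
    omega
  · rintro ⟨m, c⟩ h ⟨m', c'⟩ h' heq
    simp only [Finset.mem_sigma, Fintype.mem_piFinset, mem_ofCount] at h h'
    obtain rfl : c = c' := node.inj heq
    obtain rfl : m = m' := funext fun i => (h.2 i).symm.trans (h'.2 i)
    rfl
  · rintro (_ | c) hT
    · simp [mem_ofCount, count] at hT
    · refine ⟨⟨fun i => (c i).count, c⟩, ?_, rfl⟩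
      simp only [mem_ofCount, count] at hT
      simp only [Finset.mem_sigma, Finset.mem_piAntidiag, Fintype.mem_piFinset, mem_ofCount]
      exact ⟨⟨by omega, fun _ _ => Finset.mem_univ _⟩, fun _ => trivial⟩
  · exact fun _ _ => rfl

theorem sum_prod_inv_factorial (k n : ℕ) :
    ∑ m ∈ Finset.piAntidiag (Finset.univ : Finset (Fin k)) n,
      ∏ i, ((m i).factorial : ℚ)⁻¹ = (k : ℚ) ^ n / n.factorial := by
  have h := Finset.sum_pow_eq_sum_piAntidiag (Finset.univ : Finset (Fin k))
    (fun _ => (1 : ℚ)) n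
  simp only [Finset.sum_const, Finset.card_univ, Fintype.card_fin, nsmul_eq_mul, mul_one,
    one_pow, Finset.prod_const_one] at h
  rw [h, Finset.sum_div]
  refine Finset.sum_congr rfl fun m hm => ?_
  have hs := Nat.multinomial_spec (Finset.univ : Finset (Fin k)) m
  rw [(Finset.mem_piAntidiag.1 hm).1] at hs
  have hs' : (∏ i, ((m i).factorial : ℚ)) * (Nat.multinomial Finset.univ m : ℚ) =
      n.factorial := by exact_mod_cast hs
  have h0 : (∏ i, ((m i).factorial : ℚ)) ≠ 0 :=
    Finset.prod_ne_zero_iff.2 fun i _ => by exact_mod_cast (m i).factorial_ne_zero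
  have hn : (n.factorial : ℚ) ≠ 0 := by exact_mod_cast n.factorial_ne_zero
  rw [Finset.prod_inv_distrib, eq_div_iff hn, ← hs', inv_mul_cancel_left₀ h0]

theorem sum_weight (hk : 0 < k) (n : ℕ) :
    ∑ T ∈ ofCount k n, (hookProd T)⁻¹ = ((n.factorial : ℚ) * (k : ℚ) ^ n)⁻¹ := by
  have hk' : (k : ℚ) ≠ 0 := by exact_mod_cast hk.ne'
  induction n using Nat.strong_induction_on with
  | _ n ih =>
    cases n with
    | zero =>
      have : ofCount k 0 = {nil} := by
        ext T
        cases T <;> simp [mem_ofCount, count]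
      simp [this, hookProd, hooks]
    | succ n =>
      have step : ∀ m ∈ Finset.piAntidiag (Finset.univ : Finset (Fin k)) n,
          ∑ c ∈ Fintype.piFinset (fun i => ofCount k (m i)), (hookProd (node c))⁻¹ =
            (((n + 1 : ℕ) : ℚ) * (k : ℚ) ^ (n + 1))⁻¹ * ((k : ℚ) ^ n)⁻¹ *
              ∏ i, ((m i).factorial : ℚ)⁻¹ := by
        intro m hm
        have hsum : ∑ j, m j = n := (Finset.mem_piAntidiag.1 hm).1
        have hc : ∀ c ∈ Fintype.piFinset (fun i => ofCount k (m i)),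
            (hookProd (node c))⁻¹ = (((n + 1 : ℕ) : ℚ) * (k : ℚ) ^ (n + 1))⁻¹ *
              ∏ i, (hookProd (c i))⁻¹ := by
          intro c hc
          simp only [Fintype.mem_piFinset, mem_ofCount] at hc
          have hcount : (node c).count = n + 1 := by
            simp only [count, hc, hsum]
            omega
          rw [hookProd_node, hcount, mul_inv, Finset.prod_inv_distrib]
        have hle : ∀ i, m i < n + 1 := fun i => by
          have : m i ≤ ∑ j, m j :=
            Finset.single_le_sum (fun _ _ => Nat.zero_le _) (Finset.mem_univ i)
          omega
        rw [Finset.sum_congr rfl hc, ← Finset.mul_sum,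
          ← Finset.prod_univ_sum (fun i => ofCount k (m i)) (fun _ T => (hookProd T)⁻¹),
          Finset.prod_congr rfl fun i _ => ih (m i) (hle i)]
        simp only [mul_inv, Finset.prod_mul_distrib]
        rw [Finset.prod_inv_distrib (f := fun i => (k : ℚ) ^ m i), Finset.prod_pow_eq_pow_sum,
          hsum]
        ring
      rw [sum_ofCount_succ, Finset.sum_congr rfl step, ← Finset.mul_sum, sum_prod_inv_factorial,
        Nat.factorial_succ]
      have hn : (n.factorial : ℚ) ≠ 0 := by exact_mod_cast n.factorial_ne_zero
      have hn1 : ((n + 1 : ℕ) : ℚ) ≠ 0 := by exact_mod_cast n.succ_ne_zero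
      rw [Nat.cast_mul]
      field_simp

end KTree

/-- Reformulation of Yang's formula: for all positive integers `n` and `k`,
`∑_T n! · k^(1+2+⋯+n) / ∏_{h ∈ H(T)} (h · k^h) = k^(1+2+⋯+(n-1))`, the sum
being over all `k`-ary trees with `n` vertices. -/
theorem yang_formula_reformulated (n k : ℕ) (hn : 0 < n) (hk : 0 < k) :
    ∑ᶠ T ∈ {T : KTree k | T.count = n},
      ((n.factorial : ℚ) * (k : ℚ) ^ (∑ i ∈ Finset.range (n + 1), i)) /
        ((KTree.hooks T).map fun h : ℕ => (h : ℚ) * (k : ℚ) ^ h).prod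
      = (k : ℚ) ^ (∑ i ∈ Finset.range n, i) := by
  have hk' : (k : ℚ) ≠ 0 := by exact_mod_cast hk.ne'
  have hf : (n.factorial : ℚ) ≠ 0 := by exact_mod_cast n.factorial_ne_zero
  rw [finsum_mem_eq_finite_toFinset_sum _ (KTree.finite_count_eq n)]
  change ∑ T ∈ KTree.ofCount k n, _ / KTree.hookProd T = _
  simp only [div_eq_mul_inv]
  rw [← Finset.mul_sum, KTree.sum_weight hk, Finset.sum_range_succ, pow_add]
  field_simp
end

section
/- For positive integers n and k, the number |I(n,k)| of k-ary trees with n vertices equipped with a staircase labeling equals the sum over all k-ary trees T with n vertices of n!·k^{1+2+⋯+n}/(∏_{h ∈ H(T)} h·k^{h}), where H(T) is the multiset of hook lengths of T. -/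
namespace KTree

variable {k : ℕ}

/-- The multiset of the values `f_u` over all vertices `u`, where `f_u` is the
number of vertices on the path from the root to `u` (including both
endpoints, so the root contributes `1`). -/
def fvals : KTree k → Multiset ℕ
  | nil => 0
  | node c => 1 ::ₘ ∑ i, (fvals (c i)).map (· + 1)

/-- The subtree of a `k`-ary tree at position `p`, a list of child indices. -/
def sub : KTree k → List (Fin k) → KTree k
  | t, [] => t
  | nil, _ :: _ => nil
  | node c, i :: p => sub (c i) p

/-- A `k`-ary tree is complete if every internal vertex has either all of its
`k` subtrees empty or all of them nonempty. -/
def IsComplete : KTree k → Prop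
  | nil => True
  | node c => ((∀ i, c i = nil) ∨ (∀ i, c i ≠ nil)) ∧ ∀ i, IsComplete (c i)

end KTree

/-- A staircase labeling of a `k`-ary tree `T` with `n` vertices: each vertex
(identified with its position, a list of child indices) receives a vector over
`[k]` (represented by `Fin k`); the labels are `C_0, C_1, …, C_{n-1}` where
`C_i` has length `i` (equivalently, the label lengths are distinct and `< n`);
along any path from the root to a leaf the label lengths strictly increase;
and whenever a vertex `u` labeled by a vector of length `i` has a descendant
`v` reached through the `r`-th child of `u`, the `(i+1)`-st entry of the label
of `v` equals `r`. -/
structure Staircase (k n : ℕ) (T : KTree k) where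
  lab : {p : List (Fin k) // T.sub p ≠ KTree.nil} → List (Fin k)
  length_lt : ∀ p, (lab p).length < n
  length_inj : Function.Injective fun p => (lab p).length
  length_mono : ∀ (p : List (Fin k)) (i : Fin k) (hp : T.sub p ≠ KTree.nil)
    (hpi : T.sub (p ++ [i]) ≠ KTree.nil),
    (lab ⟨p, hp⟩).length < (lab ⟨p ++ [i], hpi⟩).length
  entry_eq : ∀ (p q : List (Fin k)) (r : Fin k) (hp : T.sub p ≠ KTree.nil)
    (hq : T.sub (p ++ r :: q) ≠ KTree.nil),
    (lab ⟨p ++ r :: q, hq⟩)[(lab ⟨p, hp⟩).length]? = some r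

/-! ### Vertices -/

namespace KTree

variable {k : ℕ}

/-- The vertices of a `k`-ary tree, identified with their positions. -/
abbrev Vert (T : KTree k) : Type := {p : List (Fin k) // T.sub p ≠ nil}

lemma nil_sub (p : List (Fin k)) : (nil : KTree k).sub p = nil := by
  cases p <;> rfl

lemma sub_append (T : KTree k) (p q : List (Fin k)) : T.sub (p ++ q) = (T.sub p).sub q := by
  induction p generalizing T with
  | nil => cases T <;> rfl
  | cons i p ih =>
    cases T with
    | nil => simp [sub, nil_sub]
    | node c => simpa [sub] using ih (c i)

lemma sub_prefix_ne {T : KTree k} {p q : List (Fin k)} (h : T.sub (p ++ q) ≠ nil) :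
    T.sub p ≠ nil := by
  intro h'
  rw [sub_append, h', nil_sub] at h
  exact h rfl

instance : IsEmpty (Vert (nil : KTree k)) := ⟨fun v => v.2 (nil_sub _)⟩

/-- The root of a nonempty tree. -/
def root (c : Fin k → KTree k) : Vert (node c) := ⟨[], fun h => by cases h⟩

/-- A vertex of the `i`-th subtree of the root, seen as a vertex of the whole tree. -/
def child (c : Fin k → KTree k) (i : Fin k) (v : Vert (c i)) : Vert (node c) :=
  ⟨i :: v.1, v.2⟩

/-- A vertex of a nonempty tree is the root or a vertex of one of the `k` subtrees. -/
def vertNode (c : Fin k → KTree k) : Option (Σ i, Vert (c i)) ≃ Vert (node c) where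
  toFun x := x.elim (root c) fun y => child c y.1 y.2
  invFun v := match v with
    | ⟨[], _⟩ => none
    | ⟨i :: p, h⟩ => some ⟨i, p, h⟩
  left_inv x := by
    rcases x with _ | ⟨i, p, h⟩ <;> rfl
  right_inv v := by
    rcases v with ⟨_ | ⟨i, p⟩, h⟩ <;> rfl

instance finite_vert (T : KTree k) : Finite (Vert T) := by
  induction T with
  | nil => infer_instance
  | node c ih => exact Finite.of_equiv _ (vertNode c)

noncomputable instance (T : KTree k) : Fintype (Vert T) := Fintype.ofFinite _

lemma sum_vert_node {M : Type*} [AddCommMonoid M] (c : Fin k → KTree k)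
    (f : Vert (node c) → M) : ∑ v, f v = f (root c) + ∑ i, ∑ v, f (child c i v) := by
  rw [← (vertNode c).sum_comp, Fintype.sum_option, Fintype.sum_sigma]
  rfl

lemma card_vert (T : KTree k) : Fintype.card (Vert T) = T.count := by
  induction T with
  | nil => simp [count]
  | node c ih =>
    rw [← Finset.card_univ, Finset.card_eq_sum_ones, sum_vert_node]
    simp [count, ih]

/-- Double counting pairs (vertex, weak descendant): the hook lengths and the numbers of
vertices on the paths from the root have the same sum. -/
lemma sum_hooks (T : KTree k) : (hooks T).sum = ∑ v : Vert T, (v.1.length + 1) := by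
  induction T with
  | nil => simp [hooks]
  | node c ih =>
    have h (i : Fin k) : ∑ v : Vert (c i), ((child c i v).1.length + 1)
        = (hooks (c i)).sum + (c i).count := by
      rw [ih, ← card_vert, ← Finset.card_univ, Finset.card_eq_sum_ones, ← Finset.sum_add_distrib]
      rfl
    rw [sum_vert_node, Finset.sum_congr rfl fun i _ => h i, Finset.sum_add_distrib]
    have h0 : (root c).1.length = 0 := rfl
    simp only [hooks, count, Multiset.sum_cons, Multiset.sum_sum, h0]
    ring

lemma finite_count_le (n : ℕ) : {T : KTree k | T.count ≤ n}.Finite := by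
  induction n with
  | zero =>
    refine (Set.finite_singleton nil).subset ?_
    rintro (_ | c) h
    · rfl
    · simp [count] at h
  | succ n ih =>
    refine (((Set.Finite.pi fun _ : Fin k => ih).image node).insert nil).subset ?_
    rintro (_ | c) h
    · exact Set.mem_insert _ _
    · refine Set.mem_insert_of_mem _ ⟨c, fun i _ => ?_, rfl⟩
      have h1 : (c i).count ≤ ∑ j, (c j).count :=
        Finset.single_le_sum (f := fun j => (c j).count) (fun _ _ => Nat.zero_le _)
          (Finset.mem_univ i)
      simp only [count, Set.mem_ofPred_eq] at h ⊢
      omega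

/-! ### Increasing labelings and the hook length formula -/

/-- The labeling `ℓ` of the vertices of `T` by distinct elements of `S` increases from every
vertex to its children. -/
structure IsIncr (T : KTree k) (S : Finset ℕ) (ℓ : Vert T → ℕ) : Prop where
  inj : Function.Injective ℓ
  mem : ∀ v, ℓ v ∈ S
  mono : ∀ (p : List (Fin k)) (i : Fin k) (hp : T.sub p ≠ nil) (hpi : T.sub (p ++ [i]) ≠ nil),
    ℓ ⟨p, hp⟩ < ℓ ⟨p ++ [i], hpi⟩

/-- The analogue of `IsIncr` for a forest, given as a sequence of trees. -/
structure IsIncrForest {m : ℕ} (c : Fin m → KTree k) (S : Finset ℕ)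
    (ℓ : ∀ i, Vert (c i) → ℕ) : Prop where
  incr : ∀ i, IsIncr (c i) S (ℓ i)
  disj : ∀ i j, i ≠ j → ∀ v w, ℓ i v ≠ ℓ j w

lemma IsIncr.lt {T : KTree k} {S : Finset ℕ} {ℓ : Vert T → ℕ} (h : IsIncr T S ℓ)
    (q p : List (Fin k)) (hq : q ≠ []) (hp : T.sub p ≠ nil) (hpq : T.sub (p ++ q) ≠ nil) :
    ℓ ⟨p, hp⟩ < ℓ ⟨p ++ q, hpq⟩ := by
  induction q using List.reverseRecOn with
  | nil => exact absurd rfl hq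
  | append_singleton q i ih =>
    have hpq' : T.sub ((p ++ q) ++ [i]) ≠ nil := by simpa using hpq
    have h1 := h.mono (p ++ q) i (sub_prefix_ne hpq') hpq'
    have h2 : ℓ ⟨p ++ (q ++ [i]), hpq⟩ = ℓ ⟨(p ++ q) ++ [i], hpq'⟩ := by
      congr 2; simp
    rw [h2]
    rcases eq_or_ne q [] with rfl | hne
    · simpa using h1
    · exact (ih hne (sub_prefix_ne hpq')).trans h1

lemma isIncr_mono {T : KTree k} {S S' : Finset ℕ} {ℓ : Vert T → ℕ} (h : IsIncr T S ℓ)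
    (h' : ∀ v, ℓ v ∈ S') : IsIncr T S' ℓ := ⟨h.inj, h', h.mono⟩

/-- A labeling of a nonempty tree is increasing iff the labels of the subtrees form an
increasing labeling of a forest by numbers larger than the label of the root. -/
lemma isIncr_node_iff (c : Fin k → KTree k) (S : Finset ℕ) (ℓ : Vert (node c) → ℕ) :
    IsIncr (node c) S ℓ ↔ ℓ (root c) ∈ S ∧
      IsIncrForest c (S.filter (ℓ (root c) < ·)) fun i v => ℓ (child c i v) := by
  constructor
  · intro h
    refine ⟨h.mem _, fun i => ⟨fun v w hvw => ?_, fun v => ?_, fun p j hp hpj => ?_⟩,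
      fun i j hij v w hvw => ?_⟩
    · have := congrArg Subtype.val (h.inj hvw)
      simp only [child, List.cons.injEq, true_and] at this
      exact Subtype.ext this
    · exact Finset.mem_filter.2 ⟨h.mem _, h.lt (i :: v.1) [] (by simp) _ (child c i v).2⟩
    · exact h.mono (i :: p) j hp hpj
    · have := congrArg Subtype.val (h.inj hvw)
      simp only [child, List.cons.injEq] at this
      exact hij this.1
  · rintro ⟨h0, h⟩
    have hlt (i : Fin k) (v : Vert (c i)) : ℓ (root c) < ℓ (child c i v) :=
      (Finset.mem_filter.1 ((h.incr i).mem v)).2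
    refine ⟨?_, ?_, ?_⟩
    · rintro ⟨_ | ⟨i, p⟩, hp⟩ ⟨_ | ⟨j, q⟩, hq⟩ hpq
      · rfl
      · exact absurd hpq (hlt j ⟨q, hq⟩).ne
      · exact absurd hpq (hlt i ⟨p, hp⟩).ne'
      · rcases eq_or_ne i j with rfl | hij
        · have := (h.incr i).inj (a₁ := ⟨p, hp⟩) (a₂ := ⟨q, hq⟩) hpq
          exact Subtype.ext (congrArg (i :: ·) (congrArg Subtype.val this))
        · exact absurd hpq (h.disj i j hij ⟨p, hp⟩ ⟨q, hq⟩)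
    · rintro ⟨_ | ⟨i, p⟩, hp⟩
      · exact h0
      · exact (Finset.mem_filter.1 ((h.incr i).mem ⟨p, hp⟩)).1
    · rintro (_ | ⟨j, p⟩) i hp hpi
      · exact hlt i ⟨[], hpi⟩
      · exact (h.incr j).mono p i hp hpi

lemma isIncrForest_succ_iff {m : ℕ} (c : Fin (m + 1) → KTree k) (S : Finset ℕ)
    (ℓ : ∀ i, Vert (c i) → ℕ) :
    IsIncrForest c S ℓ ↔ IsIncr (c 0) S (ℓ 0) ∧
      IsIncrForest (fun i => c i.succ) (S \ Finset.univ.image (ℓ 0)) fun i => ℓ i.succ := by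
  constructor
  · intro h
    refine ⟨h.incr 0, fun i => isIncr_mono (h.incr i.succ) fun v => ?_,
      fun i j hij => h.disj _ _ (by simpa using hij)⟩
    simp only [Finset.mem_sdiff, (h.incr i.succ).mem v, Finset.mem_image, Finset.mem_univ,
      true_and, not_exists]
    exact fun w => h.disj 0 i.succ (Fin.succ_ne_zero i).symm w v
  · rintro ⟨h0, h⟩
    have h1 (i : Fin m) (v) (w) : ℓ 0 w ≠ ℓ i.succ v := by
      have := (Finset.mem_sdiff.1 ((h.incr i).mem v)).2
      simp only [Finset.mem_image, Finset.mem_univ, true_and, not_exists] at this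
      exact this w
    refine ⟨fun i => ?_, fun i j hij => ?_⟩
    · refine Fin.cases h0 (fun i => ?_) i
      exact isIncr_mono (h.incr i) fun v => (Finset.mem_sdiff.1 ((h.incr i).mem v)).1
    · induction i using Fin.cases with
      | zero =>
        induction j using Fin.cases with
        | zero => exact absurd rfl hij
        | succ j => exact fun v w => h1 j w v
      | succ i =>
        induction j using Fin.cases with
        | zero => exact fun v w => (h1 i v w).symm
        | succ j => exact h.disj i j (by simpa using hij)

instance finite_isIncr (T : KTree k) (S : Finset ℕ) : Finite {ℓ // IsIncr T S ℓ} :=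
  Finite.of_injective (fun ℓ v => (⟨ℓ.1 v, ℓ.2.mem v⟩ : S)) fun a b hab => by
    ext v
    exact congrArg Subtype.val (congrFun hab v)

instance finite_isIncrForest {m : ℕ} (c : Fin m → KTree k) (S : Finset ℕ) :
    Finite {ℓ // IsIncrForest c S ℓ} :=
  Finite.of_injective
    (fun ℓ i => (⟨ℓ.1 i, ℓ.2.incr i⟩ : {l // IsIncr (c i) S l})) fun a b hab => by
    ext i v
    exact congrFun (congrArg Subtype.val (congrFun hab i)) v

/-- The subtype of a product cut out by a condition on the first component and one on both. -/
def subtypeProdSigma {α β : Type*} (p : α → Prop) (q : α → β → Prop) :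
    {x : α × β // p x.1 ∧ q x.1 x.2} ≃ Σ a : {a // p a}, {b // q a.1 b} where
  toFun x := ⟨⟨x.1.1, x.2.1⟩, ⟨x.1.2, x.2.2⟩⟩
  invFun y := ⟨(y.1.1, y.2.1), y.1.2, y.2.2⟩
  left_inv _ := rfl
  right_inv _ := rfl

/-- A labeling of a nonempty tree is a label for the root and labelings of the subtrees. -/
def labelNode (c : Fin k → KTree k) : (Vert (node c) → ℕ) ≃ ℕ × (∀ i, Vert (c i) → ℕ) where
  toFun ℓ := (ℓ (root c), fun i v => ℓ (child c i v))
  invFun x v := match v with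
    | ⟨[], _⟩ => x.1
    | ⟨i :: p, h⟩ => x.2 i ⟨p, h⟩
  left_inv ℓ := by
    funext ⟨p, h⟩
    cases p <;> rfl
  right_inv x := rfl

lemma card_isIncr_node (c : Fin k → KTree k) (S : Finset ℕ) :
    Nat.card {ℓ // IsIncr (node c) S ℓ}
      = ∑ s ∈ S, Nat.card {ℓ // IsIncrForest c (S.filter (s < ·)) ℓ} := by
  rw [Nat.card_congr ((Equiv.subtypeEquiv (labelNode c) (isIncr_node_iff c S)).trans
    (subtypeProdSigma (· ∈ S) fun s ℓ => IsIncrForest c (S.filter (s < ·)) ℓ)), Nat.card_sigma]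
  exact Finset.sum_coe_sort S fun s => Nat.card {ℓ // IsIncrForest c (S.filter (s < ·)) ℓ}

/-- The hockey-stick identity for falling factorials, indexed by the elements of `S`. -/
lemma sum_descFactorial (S : Finset ℕ) (N : ℕ) :
    (∑ s ∈ S, (S.filter (s < ·)).card.descFactorial N) * (N + 1)
      = S.card.descFactorial (N + 1) := by
  induction S using Finset.induction_on_min with
  | empty => simp
  | insert a S ha ih =>
    have hnot : a ∉ S := fun h => (ha a h).false
    have h1 : (insert a S).filter (a < ·) = S := by
      rw [Finset.filter_insert, if_neg (lt_irrefl a), Finset.filter_true_of_mem ha]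
    have h2 : ∀ s ∈ S, ((insert a S).filter (s < ·)).card.descFactorial N
        = (S.filter (s < ·)).card.descFactorial N := fun s hs => by
      rw [Finset.filter_insert, if_neg (ha s hs).not_gt]
    rw [Finset.sum_insert hnot, h1, Finset.sum_congr rfl h2, Finset.card_insert_of_notMem hnot,
      add_mul, ih, Nat.succ_descFactorial_succ, Nat.descFactorial_succ]
    rcases le_or_gt N S.card with h | h
    · obtain ⟨d, hd⟩ := Nat.exists_eq_add_of_le h
      rw [hd, Nat.add_sub_cancel_left]
      ring
    · simp [Nat.descFactorial_of_lt h]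

lemma card_isIncrForest {m : ℕ} (c : Fin m → KTree k)
    (hc : ∀ i S, Nat.card {ℓ // IsIncr (c i) S ℓ} * (hooks (c i)).prod
      = S.card.descFactorial (c i).count) (S : Finset ℕ) :
    Nat.card {ℓ // IsIncrForest c S ℓ} * ∏ i, (hooks (c i)).prod
      = S.card.descFactorial (∑ i, (c i).count) := by
  induction m generalizing S with
  | zero =>
    have : Nat.card {ℓ // IsIncrForest c S ℓ} = 1 := by
      rw [Nat.card_eq_one_iff_unique]
      exact ⟨inferInstance, ⟨⟨fun i => i.elim0, fun i => i.elim0, fun i => i.elim0⟩⟩⟩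
    simp [this]
  | succ m ih =>
    have _ := Fintype.ofFinite {ℓ // IsIncr (c 0) S ℓ}
    rw [Nat.card_congr ((Equiv.subtypeEquiv (Fin.consEquiv fun i => Vert (c i) → ℕ).symm
      (isIncrForest_succ_iff c S)).trans (subtypeProdSigma (fun l => IsIncr (c 0) S l)
      fun l ℓ => IsIncrForest (fun i => c i.succ) (S \ Finset.univ.image l) ℓ)),
      Nat.card_sigma, Fin.prod_univ_succ, Fin.sum_univ_succ]
    have hcard (l : {ℓ // IsIncr (c 0) S ℓ}) :
        (S \ Finset.univ.image l.1).card = S.card - (c 0).count := by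
      rw [Finset.card_sdiff_of_subset, Finset.card_image_of_injective _ l.2.inj,
        Finset.card_univ, card_vert]
      intro x hx
      obtain ⟨v, -, rfl⟩ := Finset.mem_image.1 hx
      exact l.2.mem v
    have hih (l : {ℓ // IsIncr (c 0) S ℓ}) := ih (fun i => c i.succ) (fun i => hc i.succ)
      (S \ Finset.univ.image l.1)
    simp only [hcard] at hih
    rw [← mul_assoc, mul_right_comm, Finset.sum_mul, Finset.sum_congr rfl fun l _ => hih l,
      Finset.sum_const, Finset.card_univ, smul_eq_mul, ← Nat.card_eq_fintype_card,
      mul_right_comm, hc 0 S, mul_comm, ← Nat.descFactorial_mul_descFactorial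
        (Nat.le_add_right (c 0).count (∑ i : Fin m, (c i.succ).count)), Nat.add_sub_cancel_left]

/-- The hook length formula for increasing labelings of a tree, with labels from a set that may
have more elements than the tree has vertices. -/
lemma card_isIncr (T : KTree k) (S : Finset ℕ) :
    Nat.card {ℓ // IsIncr T S ℓ} * (hooks T).prod = S.card.descFactorial T.count := by
  induction T generalizing S with
  | nil =>
    have : Nat.card {ℓ // IsIncr (nil : KTree k) S ℓ} = 1 := by
      rw [Nat.card_eq_one_iff_unique]
      exact ⟨inferInstance, ⟨⟨fun v => isEmptyElim v, fun v => isEmptyElim v,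
        fun v => isEmptyElim v, fun p i hp => absurd (nil_sub p) hp⟩⟩⟩
    simp [this, hooks, count]
  | node c ih =>
    have hF := card_isIncrForest c ih
    rw [card_isIncr_node]
    simp only [hooks, count, Multiset.prod_cons, Multiset.prod_sum]
    rw [mul_comm (1 + _), ← mul_assoc, Finset.sum_mul, Finset.sum_congr rfl fun s _ => hF _,
      add_comm 1, sum_descFactorial]

end KTree

/-! ### Labels with prescribed lengths -/

section Labels

variable {k : ℕ}

/-- There are `k ^ (m - j)` vectors of length `m` with entries prescribed at `j` distinct
positions. -/
lemma card_lists_prescribed {m j : ℕ} (g : Fin j → ℕ) (w : Fin j → Fin k)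
    (hinj : Function.Injective g) (hlt : ∀ t, g t < m) :
    Nat.card {l : List (Fin k) // l.length = m ∧ ∀ t, l[g t]? = some (w t)} = k ^ (m - j) := by
  classical
  let g' : Fin j → Fin m := fun t => ⟨g t, hlt t⟩
  have hg' : Function.Injective g' := fun a b hab => hinj (congrArg Fin.val hab)
  -- Vectors are functions on `Fin m`; the set of admissible ones is a product of singletons and
  -- copies of `Fin k`.
  let A : Fin m → Finset (Fin k) := fun x => Finset.univ.filter fun y => ∀ t, g' t = x → y = w t
  let e : {l : List (Fin k) // l.length = m ∧ ∀ t, l[g t]? = some (w t)} ≃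
      {f // f ∈ Fintype.piFinset A} :=
    { toFun := fun l => ⟨fun x => l.1[x.1]'(by rw [l.2.1]; exact x.2), by
        simp only [Fintype.mem_piFinset, A, Finset.mem_filter, Finset.mem_univ, true_and]
        rintro x t rfl
        have := l.2.2 t
        rw [List.getElem?_eq_some_iff] at this
        exact this.2⟩
      invFun := fun f => ⟨List.ofFn f.1, by simp, fun t => by
        have := f.2
        simp only [Fintype.mem_piFinset, A, Finset.mem_filter, Finset.mem_univ, true_and] at this
        rw [List.getElem?_ofFn, dif_pos (hlt t)]
        exact congrArg some (this (g' t) t rfl)⟩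
      left_inv := fun l => by
        obtain ⟨l, rfl, h⟩ := l
        simp
      right_inv := fun f => by
        ext x
        simp }
  have hA (x : Fin m) : (A x).card = if x ∈ Finset.univ.image g' then 1 else k := by
    split_ifs with hx
    · obtain ⟨t, -, rfl⟩ := Finset.mem_image.1 hx
      rw [Finset.card_eq_one]
      refine ⟨w t, ?_⟩
      ext y
      simp only [A, Finset.mem_filter, Finset.mem_univ, true_and, Finset.mem_singleton]
      refine ⟨fun h => h t rfl, ?_⟩
      rintro rfl s hs
      rw [hg' hs]
    · have : A x = Finset.univ := by
        ext y
        simp only [A, Finset.mem_filter, Finset.mem_univ, true_and, iff_true]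
        rintro t rfl
        exact absurd (Finset.mem_image_of_mem _ (Finset.mem_univ t)) hx
      simp [this]
  rw [Nat.card_congr e, Nat.card_eq_fintype_card, Fintype.card_coe, Fintype.card_piFinset,
    Finset.prod_congr rfl fun x _ => hA x, Finset.prod_ite, Finset.prod_const_one, one_mul,
    Finset.prod_const, Finset.filter_not, Finset.card_sdiff_of_subset (Finset.filter_subset _ _),
    Finset.filter_mem_eq_inter, Finset.univ_inter, Finset.card_image_of_injective _ hg']
  simp

open KTree

/-- `l` is an admissible staircase label for the vertex `v`, given the lengths `ℓ` of
all labels. -/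
def IsLabel {T : KTree k} (ℓ : Vert T → ℕ) (v : Vert T) (l : List (Fin k)) : Prop :=
  l.length = ℓ v ∧ ∀ (p q : List (Fin k)) (r : Fin k) (hp : T.sub p ≠ nil),
    v.1 = p ++ r :: q → l[ℓ ⟨p, hp⟩]? = some r

/-- The first `t` steps towards `v` lead to a vertex, the ancestor of `v` at depth `t`. -/
lemma sub_take_ne {T : KTree k} (v : Vert T) (t : ℕ) : T.sub (v.1.take t) ≠ nil := by
  apply sub_prefix_ne (q := v.1.drop t)
  rw [List.take_append_drop]
  exact v.2

lemma ancestor_inj {T : KTree k} {S : Finset ℕ} {ℓ : Vert T → ℕ} (h : IsIncr T S ℓ)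
    (v : Vert T) :
    Function.Injective fun t : Fin v.1.length => ℓ ⟨v.1.take t, sub_take_ne v t⟩ := by
  intro s t hst
  have := congrArg (List.length ∘ Subtype.val) (h.inj hst)
  simp only [Function.comp_apply, List.length_take] at this
  omega

lemma ancestor_lt {T : KTree k} {S : Finset ℕ} {ℓ : Vert T → ℕ} (h : IsIncr T S ℓ)
    (v : Vert T) (t : Fin v.1.length) : ℓ ⟨v.1.take t, sub_take_ne v t⟩ < ℓ v := by
  have h1 := h.lt (v.1.drop t) (v.1.take t) (by simp) (sub_take_ne v t)
    (by rw [List.take_append_drop]; exact v.2)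
  simpa only [List.take_append_drop] using h1

lemma depth_le {T : KTree k} {S : Finset ℕ} {ℓ : Vert T → ℕ} (h : IsIncr T S ℓ)
    (v : Vert T) : v.1.length ≤ ℓ v := by
  have := Fintype.card_le_of_injective
    (fun t : Fin v.1.length => (⟨_, ancestor_lt h v t⟩ : Fin (ℓ v)))
    fun s t hst => ancestor_inj h v (congrArg Fin.val hst)
  simpa using this

/-- Each proper ancestor of `v` fixes one entry of the label of `v`; the others are free. -/
lemma card_isLabel {T : KTree k} {S : Finset ℕ} {ℓ : Vert T → ℕ} (h : IsIncr T S ℓ)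
    (v : Vert T) : Nat.card {l // IsLabel ℓ v l} = k ^ (ℓ v - v.1.length) := by
  rw [← card_lists_prescribed (fun t : Fin v.1.length => ℓ ⟨v.1.take t, sub_take_ne v t⟩)
    (fun t => v.1[t]) (ancestor_inj h v) (ancestor_lt h v)]
  refine Nat.card_congr (Equiv.subtypeEquivRight fun l => and_congr_right fun _ => ?_)
  constructor
  · intro hl t
    refine hl (v.1.take t) (v.1.drop (t + 1)) _ _ ?_
    simp
  · rintro hl p q r hp hv
    have ht : p.length < v.1.length := by simp [hv]
    have h1 := hl ⟨p.length, ht⟩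
    have h2 : v.1.take p.length = p := by simp [hv]
    have h3 : v.1[p.length] = r := by simp [hv]
    simpa only [h2, h3, Fin.getElem_fin] using h1

/-- The label lengths of a staircase labeling. -/
def Staircase.lengths {n : ℕ} {T : KTree k} (s : Staircase k n T) :
    {ℓ // IsIncr T (Finset.range n) ℓ} :=
  ⟨fun v => (s.lab v).length, s.length_inj, fun v => Finset.mem_range.2 (s.length_lt v),
    s.length_mono⟩

/-- The labelings with given lengths: the labels of the vertices are independent. -/
def fiberEquiv {n : ℕ} {T : KTree k} (ℓ : {ℓ // IsIncr T (Finset.range n) ℓ}) :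
    {s : Staircase k n T // s.lengths = ℓ} ≃ ∀ v : Vert T, {l // IsLabel ℓ.1 v l} where
  toFun s v := ⟨s.1.lab v, by
    obtain ⟨s, rfl⟩ := s
    refine ⟨rfl, ?_⟩
    rintro p q r hp hv
    obtain ⟨v, hv'⟩ := v
    obtain rfl : v = _ := hv
    exact s.entry_eq p q r hp hv'⟩
  invFun f :=
    have hf : (fun v => (f v).1.length) = ℓ.1 := funext fun v => (f v).2.1
    have hf' (v) : (f v).1.length = ℓ.1 v := (f v).2.1
    ⟨{  lab := fun v => (f v).1
        length_lt := fun v => by rw [hf']; exact Finset.mem_range.1 (ℓ.2.mem v)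
        length_inj := by rw [hf]; exact ℓ.2.inj
        length_mono := fun p i hp hpi => by rw [hf', hf']; exact ℓ.2.mono p i hp hpi
        entry_eq := fun p q r hp hq => by rw [hf']; exact (f _).2.2 p q r hp rfl },
      Subtype.ext hf⟩
  left_inv _ := rfl
  right_inv _ := rfl

lemma finite_isLabel {T : KTree k} (ℓ : Vert T → ℕ) (v : Vert T) :
    Finite {l // IsLabel ℓ v l} :=
  ((List.finite_length_eq (Fin k) (ℓ v)).subset fun _ h => h.1).to_subtype

instance finite_staircase (n : ℕ) (T : KTree k) : Finite (Staircase k n T) := by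
  have (ℓ : {ℓ // IsIncr T (Finset.range n) ℓ}) : Finite {s : Staircase k n T // s.lengths = ℓ} :=
    have := finite_isLabel ℓ.1
    Finite.of_equiv _ (fiberEquiv ℓ).symm
  exact Finite.of_equiv _ (Equiv.sigmaFiberEquiv (Staircase.lengths (n := n) (T := T)))

/-- The staircase labelings with given lengths number `k ^ (1 + ⋯ + n - ∑ h)`, whatever the
lengths are. -/
lemma card_fiber {n : ℕ} {T : KTree k} (hT : T.count = n)
    (ℓ : {ℓ // IsIncr T (Finset.range n) ℓ}) :
    Nat.card {s : Staircase k n T // s.lengths = ℓ} * k ^ (hooks T).sum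
      = k ^ ∑ i ∈ Finset.range (n + 1), i := by
  rw [Nat.card_congr (fiberEquiv ℓ), Nat.card_pi, Finset.prod_congr rfl fun v _ =>
    card_isLabel ℓ.2 v, Finset.prod_pow_eq_pow_sum, ← pow_add, sum_hooks,
    ← Finset.sum_add_distrib]
  have himg : Finset.univ.image ℓ.1 = Finset.range n := by
    apply Finset.eq_of_subset_of_card_le
    · intro x hx
      obtain ⟨v, -, rfl⟩ := Finset.mem_image.1 hx
      exact ℓ.2.mem v
    · rw [Finset.card_image_of_injective _ ℓ.2.inj, Finset.card_univ, card_vert, hT,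
        Finset.card_range]
  have hv (v : Vert T) : ℓ.1 v - v.1.length + (v.1.length + 1) = ℓ.1 v + 1 := by
    have := depth_le ℓ.2 v
    omega
  rw [Finset.sum_congr rfl fun v _ => hv v, Finset.sum_range_succ', add_zero,
    ← Finset.sum_congr himg fun _ _ => rfl, Finset.sum_image fun _ _ _ _ h => ℓ.2.inj h]

lemma card_staircase {n : ℕ} {T : KTree k} (hT : T.count = n) :
    Nat.card (Staircase k n T) * ((hooks T).prod * k ^ (hooks T).sum)
      = n.factorial * k ^ ∑ i ∈ Finset.range (n + 1), i := by
  have _ := Fintype.ofFinite {ℓ // IsIncr T (Finset.range n) ℓ}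
  rw [← Nat.card_congr (Equiv.sigmaFiberEquiv (Staircase.lengths (n := n) (T := T))),
    Nat.card_sigma, mul_left_comm, Finset.sum_mul, Finset.sum_congr rfl fun ℓ _ => card_fiber hT ℓ,
    Finset.sum_const, Finset.card_univ, smul_eq_mul, ← Nat.card_eq_fintype_card, ← mul_assoc,
    mul_comm (hooks T).prod, card_isIncr, Finset.card_range, hT, Nat.descFactorial_self]

lemma hooks_pos (T : KTree k) : ∀ h ∈ hooks T, 0 < h := by
  induction T with
  | nil => simp [hooks]
  | node c ih =>
    intro h hh
    simp only [hooks, Multiset.mem_cons, Multiset.mem_sum, Finset.mem_univ, true_and] at hh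
    rcases hh with rfl | ⟨i, hi⟩
    · simp [count]
    · exact ih i h hi

lemma prod_hooks_cast (k : ℕ) (s : Multiset ℕ) :
    (s.map fun h : ℕ => (h : ℚ) * (k : ℚ) ^ h).prod = ((s.prod * k ^ s.sum : ℕ) : ℚ) := by
  induction s using Multiset.induction_on with
  | empty => simp
  | cons a s ih =>
    rw [Multiset.map_cons, Multiset.prod_cons, ih, Multiset.prod_cons, Multiset.sum_cons]
    push_cast
    ring

end Labels

/-- The number of `k`-ary trees with `n` vertices equipped with a staircase
labeling equals `∑_T n! · k^(1+2+⋯+n) / ∏_{h ∈ H(T)} (h · k^h)`, the sum being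
over all `k`-ary trees with `n` vertices. -/
theorem card_staircase_labeled_trees (n k : ℕ) (hn : 0 < n) (hk : 0 < k) :
    (Nat.card ((T : {T : KTree k // KTree.count T = n}) × Staircase k n T.val) : ℚ)
      = ∑ᶠ T ∈ {T : KTree k | T.count = n},
          ((n.factorial : ℚ) * (k : ℚ) ^ (∑ i ∈ Finset.range (n + 1), i)) /
            ((KTree.hooks T).map fun h : ℕ => (h : ℚ) * (k : ℚ) ^ h).prod := by
  have hfin : {T : KTree k | T.count = n}.Finite :=
    (KTree.finite_count_le n).subset fun _ h => le_of_eq h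
  have _ : Finite {T : KTree k // T.count = n} := hfin.to_subtype
  have _ := Fintype.ofFinite {T : KTree k // T.count = n}
  have hterm (T : KTree k) (hT : T.count = n) : (Nat.card (Staircase k n T) : ℚ)
      = ((n.factorial : ℚ) * (k : ℚ) ^ (∑ i ∈ Finset.range (n + 1), i)) /
          ((KTree.hooks T).map fun h : ℕ => (h : ℚ) * (k : ℚ) ^ h).prod := by
    rw [prod_hooks_cast, eq_div_iff, ← Nat.cast_mul, card_staircase hT]
    · push_cast
      rfl
    · have h0 : (KTree.hooks T).prod ≠ 0 := fun h =>
        (hooks_pos T 0 (Multiset.prod_eq_zero_iff.1 h)).false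
      exact Nat.cast_ne_zero.2 (mul_ne_zero h0 (pow_ne_zero _ hk.ne'))
  rw [Nat.card_sigma, Nat.cast_sum, ← finsum_mem_congr (s := {T : KTree k | T.count = n}) rfl hterm,
    ← finsum_set_coe_eq_finsum_mem]
  exact (finsum_eq_sum_of_fintype fun T : {T : KTree k // T.count = n} =>
    (Nat.card (Staircase k n T.1) : ℚ)).symm
end
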